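/- Let H be a Hopf algebra over a field, B ⊆ H a normal Hopf subalgebra such that H is free as a B-module, and suppose every H-module is semisimple over the quotient H//B (i.e., the relevant Lyndon–Hochschild–Serre spectral sequence collapses, giving Ext^i_H(Q,N) ≅ Hom_{H//B}(k, Ext^i_B(Q,N))). Then an H-module Q is projective as an H-module if and only if it is projective as a B-module. -/

import Mathlib

/-!
If `H` is projective over `B`, an `H`-linear splitting of a free cover of `Q` is also `B`-linear,
and the cover is a direct sum of copies of `H`, hence `B`-projective; so `B`-projectivity is
inherited by `Q`. Conversely, if `Q` is `B`-projective then `Ext¹_B(Q, N)` vanishes for every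
`H`-module `N`, hence so does `Hom_{H//B}(k, Ext¹_B(Q, N)) ≅ Ext¹_H(Q, N)`, and an object whose
`Ext¹` into everything vanishes is projective.
-/

open CategoryTheory

/-- `Hom_{R}(k, X)`, the `R`-linear maps from the trivial module `k` (an `R`-module via
the augmentation `ρ : R →+* k`) to `X` (an `R`-module via `σ`). -/
def homFromTrivial (R k X : Type) [Ring R] [Field k] (ρ : R →+* k)
    [AddCommGroup X] (σ : Module R X) : Type :=
  letI : Module R k := Module.compHom k ρ
  letI := σ
  k →ₗ[R] X

noncomputable instance (R k X : Type) [Ring R] [Field k] (ρ : R →+* k)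
    [AddCommGroup X] (σ : Module R X) : AddCommGroup (homFromTrivial R k X ρ σ) := by
  delta homFromTrivial; infer_instance

universe v w w'

instance subsingleton_homFromTrivial (R k X : Type) [Ring R] [Field k] (ρ : R →+* k)
    [AddCommGroup X] [Subsingleton X] (σ : Module R X) :
    Subsingleton (homFromTrivial R k X ρ σ) :=
  letI : Module R k := Module.compHom k ρ
  inferInstanceAs (Subsingleton (k →ₗ[R] X))

theorem module_projective_finsupp (R α M : Type*) [Semiring R] [AddCommMonoid M] [Module R M]
    [Module.Projective R M] : Module.Projective R (α →₀ M) := by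
  classical
  exact .of_equiv' (finsuppLequivDFinsupp R).symm

theorem module_projective_trans (R S M : Type*) [Semiring R] [Semiring S] [AddCommMonoid M]
    [Module R S] [Module S M] [Module R M] [IsScalarTower R S S] [IsScalarTower R S M]
    [Module.Projective R S] [Module.Projective S M] : Module.Projective R M := by
  obtain ⟨s, hs⟩ := Module.projective_def.mp ‹Module.Projective S M›
  have := module_projective_finsupp R M S
  exact .of_split (s.restrictScalars R) ((Finsupp.linearCombination S id).restrictScalars R)
    (LinearMap.ext hs)

theorem projective_restrictScalars_obj {R S : Type*} [Ring R] [Ring S] (f : R →+* S)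
    (hf : @Module.Projective R _ S _ (Module.compHom S f)) (P : ModuleCat.{v} S) [Small.{v} S]
    [Projective P] : Projective ((ModuleCat.restrictScalars f).obj P) := by
  let : Module R S := Module.compHom S f
  let : Module R P := Module.compHom P f
  have : IsScalarTower R S S := ⟨fun r s t ↦ mul_assoc (f r) s t⟩
  have : IsScalarTower R S P := ⟨fun r s x ↦ mul_smul (f r) s x⟩
  have : Module.Projective R ((ModuleCat.restrictScalars f).obj P) :=
    module_projective_trans R S P
  exact ModuleCat.projective_of_categoryTheory_projective _

theorem projective_of_projective_obj_of_ext_one {C D : Type*} [Category* C] [Abelian C]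
    [Category* D] [Abelian D] [HasExt.{w} C] [HasExt.{w'} D] (F : C ⥤ D) (X : C)
    [Projective (F.obj X)]
    (hExt : ∀ Y : C, Subsingleton (Abelian.Ext (F.obj X) (F.obj Y) 1) →
      Subsingleton (Abelian.Ext X Y 1)) :
    Projective X :=
  projective_iff_subsingleton_ext_one.mpr fun Y ↦
    hExt Y (Abelian.Ext.subsingleton_of_projective _ _ 0)

theorem projective_iff_projective_restrict_of_normal_hopf_general
    {R S : Type*} [Ring R] [Ring S] [Small.{v} S] (f : R →+* S)
    (hf : @Module.Projective R _ S _ (Module.compHom S f))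
    [HasExt.{w} (ModuleCat.{v} S)] [HasExt.{w'} (ModuleCat.{v} R)] (Q : ModuleCat.{v} S)
    (hExt : ∀ N : ModuleCat.{v} S,
      Subsingleton (Abelian.Ext ((ModuleCat.restrictScalars f).obj Q)
        ((ModuleCat.restrictScalars f).obj N) 1) → Subsingleton (Abelian.Ext Q N 1)) :
    Projective Q ↔ Projective ((ModuleCat.restrictScalars f).obj Q) :=
  ⟨fun _ ↦ projective_restrictScalars_obj f hf Q,
    fun _ ↦ projective_of_projective_obj_of_ext_one (ModuleCat.restrictScalars f) Q hExt⟩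

/-- Let `H` be a Hopf algebra over a field `k`, `B ⊆ H` a normal Hopf
subalgebra (given by an injective map `ι : B → H` of `k`-algebras whose image is stable
under the coproduct and the antipode, and such that the left ideal generated by the
augmentation ideal `B⁺` is also the right ideal it generates) such that `H` is free as
a `B`-module, and suppose every `H`-module is semisimple over the quotient `H//B`
(i.e., the relevant Lyndon–Hochschild–Serre spectral sequence collapses, giving
isomorphisms `Ext^i_H(Q,N) ≅ Hom_{H//B}(k, Ext^i_B(Q,N))`).  Here the quotient `H//B`
is presented as a surjection `π : H → Hbar` with kernel `H·B⁺` and induced augmentation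
`ρ`, and the `H//B`-module structures on the groups `Ext^i_B(Q,N)` are the data `σ`.
Then an `H`-module `Q` is projective as an `H`-module if and only if it is projective
as a `B`-module. -/
theorem projective_iff_projective_restrict_of_normal_hopf
    (k B H : Type) [Field k] [Ring H] [HopfAlgebra k H] [Ring B] [Algebra k B]
    (ι : B →ₐ[k] H) (hι : Function.Injective ι)
    -- `B` is a Hopf subalgebra of `H`:
    (hcomul : ∀ b : B, Coalgebra.comul (R := k) (ι b) ∈
      LinearMap.range (TensorProduct.map ι.toLinearMap ι.toLinearMap))
    (hantipode : ∀ b : B, HopfAlgebra.antipode (R := k) (ι b) ∈ Set.range ι)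
    -- `B` is normal in `H`: the left ideal generated by the augmentation ideal `B⁺`
    -- coincides with the right ideal it generates:
    (hnormal :
      ((Ideal.span {x : H | x ∈ Set.range ι ∧ Coalgebra.counit (R := k) x = 0} :
        Ideal H) : Set H) =
      ((Submodule.span Hᵐᵒᵖ {x : H | x ∈ Set.range ι ∧ Coalgebra.counit (R := k) x = 0} :
        Submodule Hᵐᵒᵖ H) : Set H))
    -- `H` is free as a `B`-module:
    (hfree : @Module.Free B H _ _ (Module.compHom H ι.toRingHom))
    -- the quotient `H//B = H/(H·B⁺)`:
    (Hbar : Type) [Ring Hbar] (π : H →+* Hbar) (hπ : Function.Surjective π)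
    (hker : RingHom.ker π =
      Ideal.span {x : H | x ∈ Set.range ι ∧ Coalgebra.counit (R := k) x = 0})
    -- every module over `H//B` is semisimple:
    (hss : IsSemisimpleRing Hbar)
    -- the augmentation of `H//B` induced by the counit:
    (ρ : Hbar →+* k) (hρ : ∀ x : H, ρ (π x) = Coalgebra.counit (R := k) x)
    [HasExt.{0} (ModuleCat H)] [HasExt.{0} (ModuleCat B)]
    (Q : ModuleCat H)
    -- the `H//B`-module structure on each `Ext^i_B(Q, N)`:
    (σ : ∀ (i : ℕ) (N : ModuleCat H), Module Hbar
      (Abelian.Ext ((ModuleCat.restrictScalars ι.toRingHom).obj Q)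
        ((ModuleCat.restrictScalars ι.toRingHom).obj N) i))
    -- the collapsing of the LHS spectral sequence:
    (hiso : ∀ (i : ℕ) (N : ModuleCat H), Nonempty
      (Abelian.Ext Q N i ≃+ homFromTrivial Hbar k
        (Abelian.Ext ((ModuleCat.restrictScalars ι.toRingHom).obj Q)
          ((ModuleCat.restrictScalars ι.toRingHom).obj N) i) ρ (σ i N))) :
    Projective Q ↔ Projective ((ModuleCat.restrictScalars ι.toRingHom).obj Q) :=
  projective_iff_projective_restrict_of_normal_hopf_general ι.toRingHom
    (@Module.Projective.of_free _ _ _ _ (Module.compHom H ι.toRingHom) hfree) Q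
    fun N _ ↦ (hiso 1 N).some.toEquiv.subsingleton
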